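/- Let V be a variety having a weak m-difference term for every m ≥ 2, and let A ∈ V. Then: (1) for any θ ∈ Con A and θ₁,…,θₙ ∈ Ξ(θ): (a) for any congruence γ of A, C(θ₁,…,θₙ;γ) holds if and only if [θ₁,…,θₙ] ≤ γ; (b) if η ≤ θ₁∧⋯∧θₙ, then [θ₁/η,…,θₙ/η] = ([θ₁,…,θₙ] ∨ η)/η in A/η; (c) for n > m ≥ 1, [θ₁,…,θ_m,[θ_{m+1},…,θₙ]] ≤ [θ₁,…,θₙ]; (2) for any n ≥ 2, the class of n-supernilpotent algebras in V is closed under homomorphic images, subalgebras, and products (i.e., forms a subvariety of V); (3) if A is n-supernilpotent, then A is nilpotent of class n−1, and consequently every covering pair γ ≺ σ inside a supernilpotent interval of Con A is abelian (C(σ,σ;γ) holds). -/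

import Mathlib

set_option autoImplicit false

namespace UA

/-- A signature: a type of operation symbols, each with a finite arity. -/
structure Signature : Type 1 where
  ops : Type
  arity : ops → ℕ

/-- An algebra for a signature: a carrier set together with an interpretation
of every operation symbol. -/
structure Algebra (σ : Signature) : Type 1 where
  carrier : Type
  interp : (o : σ.ops) → (Fin (σ.arity o) → carrier) → carrier

variable {σ : Signature}

/-- A congruence of an algebra: an equivalence relation compatible with all
basic operations. -/
structure Con (A : Algebra σ) : Type where
  r : A.carrier → A.carrier → Prop
  refl : ∀ a, r a a
  symm : ∀ {a b}, r a b → r b a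
  trans : ∀ {a b c}, r a b → r b c → r a c
  compat : ∀ (o : σ.ops) (x y : Fin (σ.arity o) → A.carrier),
      (∀ i, r (x i) (y i)) → r (A.interp o x) (A.interp o y)

namespace Con

variable {A : Algebra σ}

instance : LE (Con A) := ⟨fun c d => ∀ a b : A.carrier, c.r a b → d.r a b⟩
instance : LT (Con A) := ⟨fun c d => c ≤ d ∧ ¬ d ≤ c⟩

/-- The total congruence `1_A`. -/
def top : Con A where
  r := fun _ _ => True
  refl := fun _ => trivial
  symm := fun _ => trivial
  trans := fun _ _ => trivial
  compat := fun _ _ _ _ => trivial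

/-- The identity congruence `0_A`. -/
def bot : Con A where
  r := fun a b => a = b
  refl := fun _ => rfl
  symm := fun h => h.symm
  trans := fun h h' => h.trans h'
  compat := fun o _ _ h => congrArg (A.interp o) (funext h)

/-- Meet of an arbitrary family of congruences (intersection). -/
def sInf (S : Set (Con A)) : Con A where
  r a b := ∀ c ∈ S, c.r a b
  refl a c _ := c.refl a
  symm h c hc := c.symm (h c hc)
  trans h h' c hc := c.trans (h c hc) (h' c hc)
  compat o x y h c hc := c.compat o x y (fun i => h i c hc)

/-- Binary meet of congruences. -/
def inf (c d : Con A) : Con A where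
  r a b := c.r a b ∧ d.r a b
  refl a := ⟨c.refl a, d.refl a⟩
  symm h := ⟨c.symm h.1, d.symm h.2⟩
  trans h h' := ⟨c.trans h.1 h'.1, d.trans h.2 h'.2⟩
  compat o x y h := ⟨c.compat o x y fun i => (h i).1, d.compat o x y fun i => (h i).2⟩

/-- The congruence generated by a set of pairs. -/
def conGen (S : Set (A.carrier × A.carrier)) : Con A :=
  sInf {c : Con A | ∀ p ∈ S, c.r p.1 p.2}

/-- Binary join of congruences. -/
def sup (c d : Con A) : Con A := conGen {p | c.r p.1 p.2 ∨ d.r p.1 p.2}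

/-- Join of a family of congruences. -/
def iSup {I : Type} (f : I → Con A) : Con A := conGen {p | ∃ i, (f i).r p.1 p.2}

/-- Composition of congruences as binary relations. -/
def comp (c d : Con A) (a b : A.carrier) : Prop := ∃ x, c.r a x ∧ d.r x b

/-- `d` covers `c` in the congruence lattice. -/
def Covers (c d : Con A) : Prop := c < d ∧ ∀ e : Con A, c < e → e ≤ d → e = d

theorem le_sup_right {c d : Con A} : d ≤ sup c d :=
  fun a b h e he => he (a, b) (Or.inr h)

def toSetoid (c : Con A) : Setoid A.carrier := ⟨c.r, ⟨c.refl, c.symm, c.trans⟩⟩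

end Con

/-- The quotient algebra `A/γ`. -/
noncomputable def quotAlg (A : Algebra σ) (γ : Con A) : Algebra σ where
  carrier := Quotient γ.toSetoid
  interp o x := Quotient.mk γ.toSetoid (A.interp o (fun i => (x i).out))

/-- The quotient congruence `α/γ` for `γ ≤ α`. -/
noncomputable def Con.quot {A : Algebra σ} (α γ : Con A) (h : γ ≤ α) : Con (quotAlg A γ) where
  r x y := Quotient.liftOn₂ x y (fun a b => α.r a b)
    (fun a b a' b' ha hb => propext
      ⟨fun hr => α.trans (α.symm (h _ _ ha)) (α.trans hr (h _ _ hb)),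
       fun hr => α.trans (h _ _ ha) (α.trans hr (α.symm (h _ _ hb)))⟩)
  refl x := Quotient.inductionOn x fun a => α.refl a
  symm {x y} h' := Quotient.inductionOn₂ x y (fun _ _ hab => α.symm hab) h'
  trans {x y z} h1 h2 :=
    Quotient.inductionOn₃ x y z (fun _ _ _ hab hbc => α.trans hab hbc) h1 h2
  compat o x y hxy := by
    show α.r (A.interp o fun i => (x i).out) (A.interp o fun i => (y i).out)
    refine α.compat o _ _ fun i => ?_
    have h1 := hxy i
    rw [← Quotient.out_eq (x i), ← Quotient.out_eq (y i)] at h1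
    exact h1

/-- The polynomial operations of an algebra: the clone generated by the basic
operations, the projections and the constants. -/
inductive IsPolynomial (A : Algebra σ) : {n : ℕ} → ((Fin n → A.carrier) → A.carrier) → Prop
  | proj {n : ℕ} (i : Fin n) : IsPolynomial A (fun x => x i)
  | const {n : ℕ} (a : A.carrier) : IsPolynomial A (fun _ : Fin n → A.carrier => a)
  | app {n : ℕ} (o : σ.ops) (g : Fin (σ.arity o) → (Fin n → A.carrier) → A.carrier) :
      (∀ j, IsPolynomial A (g j)) → IsPolynomial A (fun x => A.interp o (fun j => g j x))

/-- Substituting, coordinatewise according to the grouping `g` and the choice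
vector `ε`, the entries of `b` (where `ε` is `true`) or of `a` (where `ε` is `false`). -/
def chooseVec {β : Type} {N n : ℕ} (g : Fin N → Fin n) (a b : Fin N → β)
    (ε : Fin n → Bool) : Fin N → β :=
  fun i => if ε (g i) then b i else a i

/-- The higher centralizer relation `C(α₁,…,αₙ,β;δ)` of Bulatov.  Polynomials with
grouped variables are modelled by a polynomial `p` of arity `N` together with a
grouping map `g : Fin N → Fin (n+1)`; the group `Fin.last n` is the `β`-group. -/
def Centralizes {A : Algebra σ} {n : ℕ} (α : Fin n → Con A) (β δ : Con A) : Prop :=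
  ∀ (N : ℕ) (p : (Fin N → A.carrier) → A.carrier), IsPolynomial A p →
    ∀ (g : Fin N → Fin (n + 1)) (a b : Fin N → A.carrier),
      (∀ i, (Fin.lastCases (motive := fun _ => Con A) β α (g i)).r (a i) (b i)) →
      (∀ ε : Fin n → Bool, ε ≠ (fun _ => true) →
        δ.r (p (chooseVec g a b (Fin.lastCases (motive := fun _ => Bool) false ε)))
            (p (chooseVec g a b (Fin.lastCases (motive := fun _ => Bool) true ε)))) →
      δ.r (p (chooseVec g a b (Fin.lastCases (motive := fun _ => Bool) false fun _ => true)))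
          (p (chooseVec g a b (Fin.lastCases (motive := fun _ => Bool) true fun _ => true)))

/-- The higher commutator `[α₁,…,αₙ,β]`: the smallest congruence `δ` such that
`C(α₁,…,αₙ,β;δ)` holds. -/
def commutator {A : Algebra σ} {n : ℕ} (α : Fin n → Con A) (β : Con A) : Con A :=
  Con.sInf {δ : Con A | Centralizes α β δ}

/-- The higher commutator of a nonempty list of congruences, with the convention
`[α] = α` for a single congruence. -/
def commList {A : Algebra σ} : {n : ℕ} → (Fin (n + 1) → Con A) → Con A
  | 0, γ => γ 0
  | (n+1), γ => commutator (fun j : Fin (n+1) => γ j.castSucc) (γ (Fin.last (n+1)))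

/-- The `m`-fold commutator `[θ,…,θ]_m` (for `m ≥ 1`). -/
def nfold {A : Algebra σ} (θ : Con A) (m : ℕ) : Con A :=
  commList (fun _ : Fin (m - 1 + 1) => θ)

/-- The binary commutator `[c,d]`. -/
def binComm {A : Algebra σ} (c d : Con A) : Con A := commutator (fun _ : Fin 1 => c) d

/-- The lower central series `(θ]ⁿ`. -/
def lcs {A : Algebra σ} (θ : Con A) : ℕ → Con A
  | 0 => θ
  | (k+1) => binComm θ (lcs θ k)

/-- The derived series `[θ]ⁿ`. -/
def derived {A : Algebra σ} (θ : Con A) : ℕ → Con A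
  | 0 => θ
  | (k+1) => binComm (derived θ k) (derived θ k)

/-- An algebra is nilpotent if some term of the lower central series of `1_A` is `0_A`. -/
def Nilpotent (A : Algebra σ) : Prop := ∃ m, lcs (Con.top : Con A) m = Con.bot

/-- An algebra is nilpotent of class `n` if `(1_A]ⁿ = 0_A`. -/
def NilpotentOfClass (A : Algebra σ) (n : ℕ) : Prop := lcs (Con.top : Con A) n = Con.bot

/-- A congruence is solvable if some term of its derived series is `0_A`. -/
def SolvableCon {A : Algebra σ} (θ : Con A) : Prop := ∃ m, derived θ m = Con.bot

/-- `A` is `n`-supernilpotent if `[1_A,…,1_A]_n = 0_A`. -/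
def Supernilpotent (A : Algebra σ) (n : ℕ) : Prop := nfold (Con.top : Con A) n = Con.bot

/-- A polynomial `f` absorbs the tuple `a` to the element `c`. -/
def Absorbs (A : Algebra σ) {k : ℕ} (f : (Fin k → A.carrier) → A.carrier)
    (a : Fin k → A.carrier) (c : A.carrier) : Prop :=
  ∀ b : Fin k → A.carrier, (∃ i, b i = a i) → f b = c

/-- Terms over a signature with variables in `X`. -/
inductive Term (σ : Signature) (X : Type) : Type
  | var : X → Term σ X
  | app : (o : σ.ops) → (Fin (σ.arity o) → Term σ X) → Term σ X

/-- Evaluation of a term in an algebra under an assignment of the variables. -/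
def Term.eval {X : Type} (A : Algebra σ) (v : X → A.carrier) : Term σ X → A.carrier
  | Term.var x => v x
  | Term.app o t => A.interp o fun i => Term.eval A v (t i)

/-- Substitution of terms into a term. -/
def Term.subst {X Y : Type} : Term σ X → (X → Term σ Y) → Term σ Y
  | Term.var x, s => s x
  | Term.app o t, s => Term.app o fun i => Term.subst (t i) s

/-- `A` possesses a Mal'cev term. -/
def HasMalcevTerm (A : Algebra σ) : Prop :=
  ∃ t : Term σ (Fin 3), ∀ a b : A.carrier,
    t.eval A ![a, b, b] = a ∧ t.eval A ![b, b, a] = a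

/-- A class of algebras is a variety when it is the class of all models of a set
of identities. -/
def IsVariety (V : Algebra σ → Prop) : Prop :=
  ∃ E : Set (Term σ ℕ × Term σ ℕ),
    ∀ A : Algebra σ, V A ↔ ∀ e ∈ E, ∀ v : ℕ → A.carrier, e.1.eval A v = e.2.eval A v

/-- Two terms are `V`-equivalent when they evaluate equally in every member of `V`. -/
def vSetoid (V : Algebra σ → Prop) (X : Type) : Setoid (Term σ X) where
  r t s := ∀ A : Algebra σ, V A → ∀ v : X → A.carrier, t.eval A v = s.eval A v
  iseqv := ⟨fun _ _ _ _ => rfl, fun h A hA v => (h A hA v).symm,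
    fun h h' A hA v => (h A hA v).trans (h' A hA v)⟩

/-- The `V`-free algebra on the set `X` of generators. -/
noncomputable def freeAlg (V : Algebra σ → Prop) (X : Type) : Algebra σ where
  carrier := Quotient (vSetoid V X)
  interp o x := Quotient.mk (vSetoid V X) (Term.app o fun i => (x i).out)

/-- The principal congruence `θ(a,b)` generated by the pair `(a,b)`. -/
def conPair (A : Algebra σ) (a b : A.carrier) : Con A := Con.conGen {(a, b)}

/-- A weak difference term for the class `V`. -/
def IsWeakDiffTerm (V : Algebra σ → Prop) (c : Term σ (Fin 3)) : Prop :=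
  ∀ A : Algebra σ, V A → ∀ a b : A.carrier,
    (binComm (conPair A a b) (conPair A a b)).r (c.eval A ![a, b, b]) a ∧
    (binComm (conPair A a b) (conPair A a b)).r a (c.eval A ![b, b, a])

/-- A weak `n`-difference term for the class `V`. -/
def IsWeakNDiffTerm (V : Algebra σ → Prop) (n : ℕ) (c : Term σ (Fin 3)) : Prop :=
  ∀ A : Algebra σ, V A → ∀ a b : A.carrier,
    (nfold (conPair A a b) n).r (c.eval A ![a, b, b]) a ∧
    (nfold (conPair A a b) n).r a (c.eval A ![b, b, a])

/-- Order-preserving maps on the congruence lattice. -/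
def MonotoneCon {A : Algebra σ} (F : Con A → Con A) : Prop :=
  ∀ c d : Con A, c ≤ d → F c ≤ F d

/-- `p` is a weak `f`-term of `A` with respect to the interpretation `F`. -/
def IsWeakFTerm (A : Algebra σ) (F : Con A → Con A) (p : Term σ (Fin 3)) : Prop :=
  ∀ (θ : Con A) (a b : A.carrier), θ.r a b →
    (F θ).r (p.eval A ![a, b, b]) a ∧ (F θ).r a (p.eval A ![b, b, a])

/-- `p` is a weak `f`-term for the class `V`. -/
def HasWeakFTermVariety (V : Algebra σ → Prop) (p : Term σ (Fin 3)) : Prop :=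
  ∀ A : Algebra σ, V A → ∃ F : Con A → Con A, MonotoneCon F ∧ IsWeakFTerm A F p

/-- The set `T^θ_{n,f}(θ₁,…,θₙ)` of pairs coming from polynomials which
`f(θ)`-absorb on the cube `{ā₁,b̄₁}×⋯×{āₙ,b̄ₙ}`. -/
def TSet (A : Algebra σ) (F : Con A → Con A) (θ : Con A) {n : ℕ} (θs : Fin n → Con A) :
    Set (A.carrier × A.carrier) :=
  {pr | ∃ (N : ℕ) (g : (Fin N → A.carrier) → A.carrier), IsPolynomial A g ∧
    ∃ (gr : Fin N → Fin n) (a b : Fin N → A.carrier),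
      (∀ i, (θs (gr i)).r (a i) (b i)) ∧
      (∀ ε : Fin n → Bool, (∃ j, ε j = false) →
        (F θ).r (g (fun i => if ε (gr i) then b i else a i)) (g a)) ∧
      pr = (g b, g a)}

/-- Homomorphisms of algebras. -/
def IsHom (A B : Algebra σ) (h : A.carrier → B.carrier) : Prop :=
  ∀ (o : σ.ops) (x : Fin (σ.arity o) → A.carrier),
    h (A.interp o x) = B.interp o (fun i => h (x i))

/-- The product of a family of algebras. -/
def prodAlg {I : Type} (As : I → Algebra σ) : Algebra σ where
  carrier := ∀ i, (As i).carrier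
  interp o x i := (As i).interp o (fun j => x j i)

/-- The subuniverse generated by a subset. -/
inductive Gen (A : Algebra σ) (S : Set A.carrier) : A.carrier → Prop
  | base {a : A.carrier} : a ∈ S → Gen A S a
  | app (o : σ.ops) (x : Fin (σ.arity o) → A.carrier) :
      (∀ i, Gen A S (x i)) → Gen A S (A.interp o x)

/-- `A` possesses a Taylor term. -/
def HasTaylorTerm (A : Algebra σ) : Prop :=
  ∃ (n : ℕ) (t : Term σ (Fin n)), 1 ≤ n ∧
    (∀ a : A.carrier, t.eval A (fun _ => a) = a) ∧
    ∀ i : Fin n, ∃ u v : Fin n → Bool, u i = true ∧ v i = false ∧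
      ∀ x y : A.carrier,
        t.eval A (fun j => if u j then x else y) = t.eval A (fun j => if v j then x else y)

/-- The variety `V` possesses a Taylor term. -/
def VarietyHasTaylorTerm (V : Algebra σ → Prop) : Prop :=
  ∃ (n : ℕ) (t : Term σ (Fin n)), 1 ≤ n ∧
    (∀ A : Algebra σ, V A → ∀ a : A.carrier, t.eval A (fun _ => a) = a) ∧
    ∀ i : Fin n, ∃ u v : Fin n → Bool, u i = true ∧ v i = false ∧
      ∀ A : Algebra σ, V A → ∀ x y : A.carrier,
        t.eval A (fun j => if u j then x else y) = t.eval A (fun j => if v j then x else y)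

/-- `Ξ(θ)`: the smallest set of congruences containing `θ` and closed under
higher commutators (of arity at least 2) of its members. -/
inductive Xi {A : Algebra σ} (θ : Con A) : Con A → Prop
  | base : Xi θ θ
  | comm {k : ℕ} (γ : Fin (k + 2) → Con A) : (∀ j, Xi θ (γ j)) → Xi θ (commList γ)

/-- An expanded loop on the carrier `α` with extra operations indexed by `ι`. -/
structure ExpLoop (ι : Type) (ar : ι → ℕ) (α : Type) : Type where
  mul : α → α → α
  ldiv : α → α → α
  rdiv : α → α → α
  zero : α
  extra : (i : ι) → (Fin (ar i) → α) → α
  ldiv_mul : ∀ x y, ldiv x (mul x y) = y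
  mul_rdiv : ∀ x y, rdiv (mul x y) y = x
  mul_ldiv : ∀ x y, mul x (ldiv x y) = y
  rdiv_mul : ∀ x y, mul (rdiv x y) y = x
  zero_mul : ∀ x, mul zero x = x
  mul_zero : ∀ x, mul x zero = x

/-- Operation symbols of an expanded loop. -/
inductive LoopOp (ι : Type) : Type
  | mul | ldiv | rdiv | zero
  | extra : ι → LoopOp ι

/-- The signature of an expanded loop. -/
@[reducible] def loopSig (ι : Type) (ar : ι → ℕ) : Signature where
  ops := LoopOp ι
  arity o := match o with
    | .mul => 2
    | .ldiv => 2
    | .rdiv => 2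
    | .zero => 0
    | .extra i => ar i

/-- The algebra underlying an expanded loop. -/
def ExpLoop.toAlgebra {ι : Type} {ar : ι → ℕ} {α : Type} (L : ExpLoop ι ar α) :
    Algebra (loopSig ι ar) where
  carrier := α
  interp o := match o with
    | .mul => fun x => L.mul (x 0) (x 1)
    | .ldiv => fun x => L.ldiv (x 0) (x 1)
    | .rdiv => fun x => L.rdiv (x 0) (x 1)
    | .zero => fun _ => L.zero
    | .extra i => L.extra i

/-- An expanded loop is of `n`-type. -/
def ExpLoop.IsNType {ι : Type} {ar : ι → ℕ} {α : Type} (L : ExpLoop ι ar α) (n : ℕ) : Prop :=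
  (∀ p : Σ k : ℕ, (Fin k → α) → α,
      (∃ i : ι, p = ⟨ar i, L.extra i⟩) ↔
        (1 ≤ p.1 ∧ p.1 ≤ n - 1 ∧ IsPolynomial L.toAlgebra p.2 ∧
          Absorbs L.toAlgebra p.2 (fun _ => L.zero) L.zero)) ∧
  (∀ f : (Fin (n - 1) → α) → α,
      IsPolynomial L.toAlgebra f → Absorbs L.toAlgebra f (fun _ => L.zero) L.zero →
      ∀ (j : Fin (n - 1)) (x : Fin (n - 1) → α) (u v : α),
        f (Function.update x j (L.mul u v)) =
          L.mul (f (Function.update x j u)) (f (Function.update x j v))) ∧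
  (∀ k : ℕ, 2 ≤ k → k < n →
      commList (Fin.snoc (fun _ : Fin (n - k) => (Con.top : Con L.toAlgebra))
        (nfold Con.top k)) = Con.bot)

/-- `A` is polynomially equivalent to an `n`-type expanded loop on the same carrier. -/
def PolyEquivNTypeLoop (A : Algebra σ) (n : ℕ) : Prop :=
  ∃ (ι : Type) (ar : ι → ℕ) (L : ExpLoop ι ar A.carrier),
    L.IsNType n ∧
    ∀ (k : ℕ) (f : (Fin k → A.carrier) → A.carrier),
      IsPolynomial A f ↔ IsPolynomial L.toAlgebra f

/-- Left-associated product of a list with initial value `c`. -/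
def lprodFrom {β : Type} (mul : β → β → β) (c : β) (l : List β) : β := List.foldl mul c l

/-- Left-associated product of a list (with a default value for the empty list). -/
def lprodList {β : Type} (mul : β → β → β) (dflt : β) : List β → β
  | [] => dflt
  | a :: l => List.foldl mul a l

/-- Left-associated product of a nonempty tuple. -/
def lassoc {β : Type} (mul : β → β → β) : {m : ℕ} → (Fin (m + 1) → β) → β
  | 0, y => y 0
  | (m+1), y => mul (lassoc mul (Fin.init y)) (y (Fin.last (m+1)))

/-- `A` has a representation of degree `n`. -/
def HasRepOfDegree (A : Algebra σ) (n : ℕ) : Prop :=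
  ∃ (z : A.carrier) (r : (Fin 2 → A.carrier) → A.carrier),
    IsPolynomial A r ∧ (∀ x : A.carrier, r ![z, x] = x) ∧ (∀ x : A.carrier, r ![x, z] = x) ∧
    ∀ (k : ℕ) (f : (Fin k → A.carrier) → A.carrier), IsPolynomial A f →
      ∃ (c : A.carrier) (R : ℕ → (Fin k → A.carrier) → A.carrier),
        (∀ m : ℕ, 1 ≤ m → m ≤ min k n →
          ∃ (l : List (Finset (Fin k)))
            (t : (S : Finset (Fin k)) → (Fin S.card → A.carrier) → A.carrier),
            l.Nodup ∧
            (∀ S : Finset (Fin k), S ∈ l ↔ S.card = m) ∧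
            (∀ S ∈ l, IsPolynomial A (t S) ∧ Absorbs A (t S) (fun _ => z) z) ∧
            (∀ x : Fin k → A.carrier,
              R m x = lprodList (fun u v => r ![u, v]) z
                (l.map (fun S => t S (fun j => x ((S.orderIsoOfFin rfl j).val)))))) ∧
        ∀ x : Fin k → A.carrier,
          f x = lprodFrom (fun u v => r ![u, v]) c
            ((List.range' 1 (min k n)).map (fun m => R m x))

/-- Products of `0`-absorbing polynomials (of arities between `lo` and `hi`)
in a given set of variables. -/
inductive ProdOfAbs {ι : Type} {ar : ι → ℕ} {α : Type} (L : ExpLoop ι ar α)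
    (lo hi : ℕ) {I : Type} : ((I → α) → α) → Prop
  | base {p : ℕ} (h : (Fin p → α) → α) (sel : Fin p → I) :
      lo ≤ p → p ≤ hi → IsPolynomial L.toAlgebra h →
      Absorbs L.toAlgebra h (fun _ => L.zero) L.zero →
      ProdOfAbs L lo hi (fun v => h (fun j => v (sel j)))
  | mul {F G : (I → α) → α} :
      ProdOfAbs L lo hi F → ProdOfAbs L lo hi G →
      ProdOfAbs L lo hi (fun v => L.mul (F v) (G v))

/-- The terms `q_m` (for `m ≥ 2`, `qSeq q (m-2)` is `q_m`):
`q₂ := q`, `q_{m+1}(x,y,z) := q(x, q_m(x,y,y), q_m(x,y,z))`. -/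
def qSeq (q : Term σ (Fin 3)) : ℕ → Term σ (Fin 3)
  | 0 => q
  | (k+1) => q.subst ![Term.var 0, (qSeq q k).subst ![Term.var 0, Term.var 1, Term.var 1], qSeq q k]

/-!
The higher centralizer is a condition on cubes of values of polynomials. For every `φ ∈ Ξ(θ)`,
composing weak difference terms gives a polynomial `p` satisfying the Mal'cev identities modulo `φ`
on the blocks of `θ`. Such a `p` corrects cubes one direction at a time: subtracting the variation
of a face turns edges which collapse modulo a congruence `γ ≥ φ` into edges which collapse modulo
`φ`, while the cube only changes modulo `γ`.

For `φ = [θ₁,…,θₙ]` this extends `C(θ₁,…,θₙ;φ)` to every `γ ≥ φ`, and the statements on quotients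
follow since cubes lift along surjections. It also shows that, modulo a congruence `δ ∈ Ξ(θ)`,
every pair of `[θ₁,…,θₙ]` consists of the top corner of a cube and the common value of all its other
corners. Substituting these cubes, with `δ = [θ₁,…,θₙ]`, for the edges in the last direction of a
cube for `[θ₁,…,θₘ,[θₘ₊₁,…,θₙ]]` gives a cube for `[θ₁,…,θₙ]`, whence the inequality between the
nested and the flat commutator, and nilpotency of supernilpotent algebras by iteration. A nonabelian
cover `γ ≺ σ` would give a perfect congruence `σ/γ` all of whose higher commutators are equal to it.
-/

section Order

variable {A : Algebra σ}

namespace Con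

@[ext]
theorem ext {c d : Con A} (h : ∀ a b, c.r a b ↔ d.r a b) : c = d := by
  obtain ⟨r, _⟩ := c
  obtain ⟨s, _⟩ := d
  obtain rfl : r = s := funext₂ fun a b => propext (h a b)
  rfl

instance : PartialOrder (Con A) where
  le_refl _ _ _ h := h
  le_trans _ _ _ h h' a b hab := h' a b (h a b hab)
  le_antisymm _ _ h h' := ext fun a b => ⟨h a b, h' a b⟩

theorem bot_le (c : Con A) : bot ≤ c := by
  rintro a _ rfl
  exact c.refl a

theorem le_top (c : Con A) : c ≤ top :=
  fun _ _ _ => trivial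

theorem le_sup_left {c d : Con A} : c ≤ sup c d :=
  fun a b h _ he => he (a, b) (Or.inl h)

theorem sup_le {c d e : Con A} (hc : c ≤ e) (hd : d ≤ e) : sup c d ≤ e :=
  fun _ _ h => h e fun _ hp => hp.elim (hc _ _) (hd _ _)

theorem Covers.sup_eq {γ s c : Con A} (h : Covers γ s) (hcs : c ≤ s) (hcγ : ¬ c ≤ γ) :
    sup c γ = s :=
  h.2 _ ⟨le_sup_right, fun hle => hcγ (le_sup_left.trans hle)⟩ (sup_le hcs h.1.1)

end Con

theorem conPair_le {a b : A.carrier} {c : Con A} (h : c.r a b) : conPair A a b ≤ c :=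
  fun _ _ hxy => hxy c fun _ hp => hp ▸ h

end Order

section Polynomial

variable {A : Algebra σ}

theorem Con.rel_polynomial (c : Con A) {n : ℕ} {p : (Fin n → A.carrier) → A.carrier}
    (hp : IsPolynomial A p) {x y : Fin n → A.carrier} (h : ∀ i, c.r (x i) (y i)) :
    c.r (p x) (p y) := by
  induction hp with
  | proj i => exact h i
  | const a => exact c.refl a
  | app o g _ ih => exact c.compat o _ _ ih

theorem IsPolynomial.comp {m n : ℕ} {p : (Fin m → A.carrier) → A.carrier}
    (hp : IsPolynomial A p) {q : Fin m → (Fin n → A.carrier) → A.carrier}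
    (hq : ∀ i, IsPolynomial A (q i)) : IsPolynomial A fun x => p fun i => q i x := by
  induction hp with
  | proj i => exact hq i
  | const a => exact .const a
  | app o g _ ih => exact .app o _ ih

theorem Term.isPolynomial {X : Type} {n : ℕ} (t : Term σ X)
    {q : X → (Fin n → A.carrier) → A.carrier} (hq : ∀ i, IsPolynomial A (q i)) :
    IsPolynomial A fun x => t.eval A fun i => q i x := by
  induction t with
  | var i => exact hq i
  | app o s ih => exact .app o _ ih

/-- A ternary operation that is a polynomial of `A`, in curried form. -/
def IsTernaryPolynomial (A : Algebra σ)
    (p : A.carrier → A.carrier → A.carrier → A.carrier) : Prop :=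
  IsPolynomial A fun v : Fin 3 → A.carrier => p (v 0) (v 1) (v 2)

namespace IsTernaryPolynomial

variable {p : A.carrier → A.carrier → A.carrier → A.carrier}

theorem comp (hp : IsTernaryPolynomial A p) {n : ℕ} {q₀ q₁ q₂ : (Fin n → A.carrier) → A.carrier}
    (h₀ : IsPolynomial A q₀) (h₁ : IsPolynomial A q₁) (h₂ : IsPolynomial A q₂) :
    IsPolynomial A fun x => p (q₀ x) (q₁ x) (q₂ x) :=
  IsPolynomial.comp hp (q := ![q₀, q₁, q₂]) fun i => by fin_cases i <;> assumption

theorem rel (hp : IsTernaryPolynomial A p) (c : Con A) {x x' y y' z z' : A.carrier}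
    (hx : c.r x x') (hy : c.r y y') (hz : c.r z z') : c.r (p x y z) (p x' y' z') :=
  c.rel_polynomial hp (x := ![x, y, z]) (y := ![x', y', z']) fun i => by
    fin_cases i <;> assumption

end IsTernaryPolynomial

end Polynomial

section Cube

variable {A : Algebra σ} {ι κ : Type*} {α β : ι → Con A} {F : (ι → Bool) → A.carrier}

/-- `IsCube α F`: `F` is an `ι`-dimensional cube of elements of `A` lying in the subalgebra of
`A ^ (2 ^ ι)` generated by the constant cubes and the cubes which take two `α i`-related values
on the two faces orthogonal to the direction `i`. These are the families of values of polynomials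
appearing in the definition of the higher centralizer. -/
inductive IsCube (α : ι → Con A) : ((ι → Bool) → A.carrier) → Prop
  | const (a : A.carrier) : IsCube α fun _ => a
  | edge (i : ι) (x y : A.carrier) (h : (α i).r x y) : IsCube α fun ε => if ε i then y else x
  | app (o : σ.ops) (G : Fin (σ.arity o) → (ι → Bool) → A.carrier) (h : ∀ j, IsCube α (G j)) :
      IsCube α fun ε => A.interp o fun j => G j ε

namespace IsCube

theorem polynomial {N : ℕ} {p : (Fin N → A.carrier) → A.carrier} (hp : IsPolynomial A p)
    {G : Fin N → (ι → Bool) → A.carrier} (hG : ∀ j, IsCube α (G j)) :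
    IsCube α fun ε => p fun j => G j ε := by
  induction hp with
  | proj j => exact hG j
  | const a => exact .const a
  | app o q _ ih => exact .app o _ ih

theorem ternary {p : A.carrier → A.carrier → A.carrier → A.carrier}
    (hp : IsTernaryPolynomial A p) {F G H : (ι → Bool) → A.carrier} (hF : IsCube α F)
    (hG : IsCube α G) (hH : IsCube α H) : IsCube α fun ε => p (F ε) (G ε) (H ε) :=
  polynomial hp (G := ![F, G, H]) fun i => by fin_cases i <;> assumption

theorem exists_polynomial {n : ℕ} {α : Fin n → Con A} {F : (Fin n → Bool) → A.carrier}
    (hF : IsCube α F) :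
    ∃ (N : ℕ) (p : (Fin N → A.carrier) → A.carrier) (g : Fin N → Fin n)
      (a b : Fin N → A.carrier), IsPolynomial A p ∧ (∀ i, (α (g i)).r (a i) (b i)) ∧
        F = fun ε => p (chooseVec g a b ε) := by
  induction hF with
  | const a => exact ⟨0, _, Fin.elim0, Fin.elim0, Fin.elim0, .const a, nofun, rfl⟩
  | edge i x y h =>
    exact ⟨1, _, fun _ => i, fun _ => x, fun _ => y, .proj 0, fun _ => h, rfl⟩
  | app o G _ ih =>
    choose N p g a b hp hab hG using ih
    let e := Fintype.equivFin (Σ j, Fin (N j))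
    refine ⟨_, fun v => A.interp o fun j => p j fun i => v (e ⟨j, i⟩),
      fun k => g (e.symm k).1 (e.symm k).2, fun k => a (e.symm k).1 (e.symm k).2,
      fun k => b (e.symm k).1 (e.symm k).2,
      .app o _ fun j => (hp j).comp fun i => .proj (e ⟨j, i⟩), fun k => hab _ _, ?_⟩
    funext ε
    refine congrArg (A.interp o) (funext fun j => ?_)
    rw [hG j]
    refine congrArg (p j) (funext fun i => ?_)
    exact congrArg (fun s : Σ j, Fin (N j) => chooseVec (g s.1) (a s.1) (b s.1) ε s.2)
      (e.symm_apply_apply ⟨j, i⟩).symm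

theorem rel (hF : IsCube α F) {θ : Con A} {ε ε' : ι → Bool}
    (h : ∀ i, ε i ≠ ε' i → α i ≤ θ) : θ.r (F ε) (F ε') := by
  induction hF with
  | const a => exact θ.refl a
  | edge i x y hxy =>
    by_cases hi : ε i = ε' i
    · simp only [hi, θ.refl]
    · have hθ := h i hi _ _ hxy
      cases hε : ε i <;> cases hε' : ε' i <;> simp_all [θ.symm hθ]
  | app o G _ ih => exact θ.compat o _ _ ih

theorem mono (h : ∀ i, α i ≤ β i) (hF : IsCube α F) : IsCube β F := by
  induction hF with
  | const a => exact .const a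
  | edge i x y hxy => exact .edge i x y (h i _ _ hxy)
  | app o G _ ih => exact .app o G ih

theorem reindex (hF : IsCube α F) {γ : κ → Con A} (f : ι → κ) (h : ∀ i, α i ≤ γ (f i)) :
    IsCube γ fun ε => F fun i => ε (f i) := by
  induction hF with
  | const a => exact .const a
  | edge i x y hxy => exact .edge (f i) x y (h i _ _ hxy)
  | app o G _ ih => exact .app o _ ih

theorem update [DecidableEq ι] (hF : IsCube α F) (i : ι) (c : Bool) :
    IsCube α fun ε => F (Function.update ε i c) := by
  induction hF with
  | const a => exact .const a
  | edge j x y hxy =>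
    obtain rfl | hj := eq_or_ne j i
    · simpa only [Function.update_self] using .const _
    · simpa only [Function.update_of_ne hj] using .edge j x y hxy
  | app o G _ ih => exact .app o _ ih

end IsCube

theorem exists_eq_false_iff {ε : ι → Bool} : (∃ j, ε j = false) ↔ ε ≠ ⊤ := by
  simp [funext_iff]

end Cube

section Centralizer

variable {A : Algebra σ} {ι : Type*} [DecidableEq ι] {α β : ι → Con A} {δ : Con A}
  {i : ι} {s : Set ι} {F : (ι → Bool) → A.carrier}

/-- The edges of the cube `F` in direction `i` are `δ`-edges, except possibly those whose
coordinates in `s` are all `true`. -/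
def EdgesIn (δ : Con A) (i : ι) (s : Set ι) (F : (ι → Bool) → A.carrier) : Prop :=
  ∀ ε : ι → Bool, (∃ j ∈ s, ε j = false) →
    δ.r (F (Function.update ε i false)) (F (Function.update ε i true))

theorem EdgesIn.rel_update_false (h : EdgesIn δ i s F) {ε : ι → Bool}
    (hε : ∃ j ∈ s, ε j = false) : δ.r (F ε) (F (Function.update ε i false)) := by
  have hedge := h ε hε
  cases hi : ε i
  · rw [← hi, Function.update_eq_self]
    exact δ.refl _
  · rw [← hi, Function.update_eq_self] at hedge
    exact δ.symm hedge

theorem EdgesIn.rel_update_false_of_ne_top (h : EdgesIn δ i {i}ᶜ F) {ε : ι → Bool}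
    (hε : ε ≠ ⊤) : δ.r (F ε) (F (Function.update ε i false)) := by
  obtain ⟨j, hj⟩ := exists_eq_false_iff.2 hε
  obtain rfl | hji := eq_or_ne j i
  · rw [← hj, Function.update_eq_self]
    exact δ.refl _
  · exact h.rel_update_false ⟨j, hji, hj⟩

/-- The centralizer relation in terms of cubes with a distinguished direction `i`: if the edges of
an `α`-cube in direction `i` other than the one ending in the top corner are `δ`-edges, then so is
the remaining one. -/
def CubeCentralizes (α : ι → Con A) (i : ι) (δ : Con A) : Prop :=
  ∀ F, IsCube α F → EdgesIn δ i {i}ᶜ F → δ.r (F (Function.update ⊤ i false)) (F ⊤)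

theorem CubeCentralizes.mono (h : ∀ i, β i ≤ α i) (hα : CubeCentralizes α i δ) :
    CubeCentralizes β i δ :=
  fun F hF => hα F (hF.mono h)

theorem cubeCentralizes_of_le (h : α i ≤ δ) : CubeCentralizes α i δ := fun _ hF _ =>
  hF.rel fun j hj => by
    obtain rfl : j = i := by_contra fun hji => hj (Function.update_of_ne hji _ _)
    exact h

end Centralizer

section Commutator

variable {A : Algebra σ} {n : ℕ}

theorem lastCases_eq_snoc {M : Type*} (x : M) (f : Fin n → M) :
    (fun i => Fin.lastCases (motive := fun _ => M) x f i) = Fin.snoc (α := fun _ => M) f x := by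
  funext i
  cases i using Fin.lastCases <;> simp

theorem snoc_top : (Fin.snoc (α := fun _ => Bool) (⊤ : Fin n → Bool) true) = ⊤ :=
  Fin.snoc_init_self (⊤ : Fin (n + 1) → Bool)

theorem edgesIn_last_iff {δ : Con A} {F : (Fin (n + 1) → Bool) → A.carrier} :
    EdgesIn δ (Fin.last n) {Fin.last n}ᶜ F ↔ ∀ ε : Fin n → Bool, ε ≠ ⊤ →
      δ.r (F (Fin.snoc (α := fun _ => Bool) ε false))
        (F (Fin.snoc (α := fun _ => Bool) ε true)) := by
  simp only [EdgesIn, ← exists_eq_false_iff, Set.mem_compl_iff, Set.mem_singleton_iff]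
  constructor
  · rintro h ε ⟨j, hj⟩
    simpa only [Fin.update_snoc_last] using h (Fin.snoc (α := fun _ => Bool) ε true)
      ⟨j.castSucc, j.castSucc_ne_last, by simpa only [Fin.snoc_castSucc] using hj⟩
  · rintro h ε ⟨j, hj, hε⟩
    obtain ⟨k, rfl⟩ := Fin.exists_castSucc_eq.2 hj
    have hk := h (Fin.init ε) ⟨k, hε⟩
    rwa [← Fin.snoc_init_self (α := fun _ => Bool) ε, Fin.update_snoc_last, Fin.update_snoc_last]

theorem centralizes_iff {θs : Fin (n + 1) → Con A} {δ : Con A} :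
    Centralizes (fun j : Fin n => θs j.castSucc) (θs (Fin.last n)) δ ↔
      CubeCentralizes θs (Fin.last n) δ := by
  have hθs : (fun i => Fin.lastCases (motive := fun _ => Con A) (θs (Fin.last n))
      (fun j => θs j.castSucc) i) = θs :=
    (lastCases_eq_snoc _ _).trans (Fin.snoc_init_self θs)
  have hbot : Function.update ⊤ (Fin.last n) false =
      Fin.snoc (α := fun _ => Bool) (⊤ : Fin n → Bool) false := by
    rw [← snoc_top, Fin.update_snoc_last]
  simp only [CubeCentralizes, edgesIn_last_iff, hbot]
  simp only [← snoc_top, ← lastCases_eq_snoc]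
  constructor
  · intro h F hF hedge
    obtain ⟨N, p, g, a, b, hp, hab, rfl⟩ := hF.exists_polynomial
    exact h N p hp g a b (fun i => (congrFun hθs (g i)).symm ▸ hab i) hedge
  · intro h N p hp g a b hab hedge
    exact h _ (.polynomial hp fun j => .edge (g j) (a j) (b j) (congrFun hθs (g j) ▸ hab j)) hedge

theorem commList_le {θs : Fin (n + 1) → Con A} {δ : Con A}
    (h : CubeCentralizes θs (Fin.last n) δ) : commList θs ≤ δ := by
  cases n with
  | zero =>
    intro x y hxy
    exact h _ (.edge (0 : Fin 1) x y hxy) fun _ ⟨j, hj, _⟩ =>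
      (hj (Subsingleton.elim (α := Fin 1) j _)).elim
  | succ n =>
    intro x y hxy
    exact hxy δ (centralizes_iff.2 h)

theorem cubeCentralizes_commList (θs : Fin (n + 1) → Con A) :
    CubeCentralizes θs (Fin.last n) (commList θs) := by
  cases n with
  | zero => exact cubeCentralizes_of_le le_rfl
  | succ n =>
    intro F hF hedge δ hδ
    exact centralizes_iff.1 hδ F hF fun ε hε => hedge ε hε δ hδ

theorem commList_le_last (θs : Fin (n + 1) → Con A) : commList θs ≤ θs (Fin.last n) :=
  commList_le (cubeCentralizes_of_le le_rfl)

theorem commList_mono {θs φs : Fin (n + 1) → Con A} (h : ∀ i, θs i ≤ φs i) :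
    commList θs ≤ commList φs :=
  commList_le ((cubeCentralizes_commList φs).mono h)

end Commutator

section Malcev

variable {A : Algebra σ} {p : A.carrier → A.carrier → A.carrier → A.carrier} {θ δ γ : Con A}

/-- The polynomial `p` of `A` satisfies the Mal'cev identities `p a b b = a = p b b a` modulo `δ`
on each block of `θ`. -/
structure IsMalcevModulo (p : A.carrier → A.carrier → A.carrier → A.carrier)
    (θ δ : Con A) : Prop where
  isPolynomial : IsTernaryPolynomial A p
  left {a b : A.carrier} : θ.r a b → δ.r (p a b b) a
  right {a b : A.carrier} : θ.r a b → δ.r (p b b a) a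

theorem IsMalcevModulo.mono (hp : IsMalcevModulo p θ δ) (h : δ ≤ γ) : IsMalcevModulo p θ γ where
  isPolynomial := hp.isPolynomial
  left hab := h _ _ (hp.left hab)
  right hab := h _ _ (hp.right hab)

variable {ι : Type*} [DecidableEq ι] {α : ι → Con A} {i j : ι} {s : Set ι}
  {F U : (ι → Bool) → A.carrier}

/-- The cube obtained from `U` by making its edges in direction `i` with `j`-th coordinate `false`
degenerate: `p` subtracts from `U` the variation of its face `j = false` in direction `i`. -/
def collapse (p : A.carrier → A.carrier → A.carrier → A.carrier) (i j : ι)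
    (U : (ι → Bool) → A.carrier) (ε : ι → Bool) : A.carrier :=
  p (U ε) (U (Function.update ε j false))
    (U (Function.update (Function.update ε j false) i false))

theorem IsCube.collapse (hp : IsTernaryPolynomial A p) (hU : IsCube α U) :
    IsCube α (collapse p i j U) :=
  .ternary hp hU (hU.update j false) ((hU.update i false).update j false)

theorem IsMalcevModulo.rel_collapse (hp : IsMalcevModulo p θ γ) (hα : ∀ i, α i ≤ θ)
    (hU : IsCube α U) (hedge : EdgesIn γ i s U) (hj : j ∈ s) (ε : ι → Bool) :
    γ.r (collapse p i j U ε) (U ε) :=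
  have hface := hedge.rel_update_false (ε := Function.update ε j false)
    ⟨j, hj, Function.update_self _ _ _⟩
  γ.trans (hp.isPolynomial.rel γ (γ.refl _) (γ.refl _) (γ.symm hface))
    (hp.left (hU.rel fun i _ => hα i))

theorem IsMalcevModulo.edgesIn_collapse_singleton (hp : IsMalcevModulo p θ δ)
    (hα : ∀ i, α i ≤ θ) (hU : IsCube α U) (hij : i ≠ j) :
    EdgesIn δ i {j} (collapse p i j U) := by
  rintro ε ⟨k, hk, hε⟩
  rw [Set.mem_singleton_iff.1 hk] at hε
  have hface (c : Bool) : Function.update (Function.update ε i c) j false =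
      Function.update ε i c := by
    rw [Function.update_eq_self_iff, Function.update_of_ne hij.symm, hε]
  simp only [collapse, hface, Function.update_idem]
  exact δ.trans (hp.left (θ.refl _)) (δ.symm (hp.right (hU.rel fun i _ => hα i)))

theorem EdgesIn.collapse (hp : IsTernaryPolynomial A p) (hij : i ≠ j) (hU : EdgesIn δ i s U) :
    EdgesIn δ i s (collapse p i j U) := by
  rintro ε ⟨k, hk, hε⟩
  simp only [UA.collapse, Function.update_comm hij, Function.update_idem]
  refine hp.rel δ (hU ε ⟨k, hk, hε⟩) (hU _ ⟨k, hk, ?_⟩) (δ.refl _)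
  rw [Function.update_apply, hε, ite_self]

theorem EdgesIn.congr (hF : EdgesIn γ i s F) (h : ∀ ε, γ.r (U ε) (F ε)) : EdgesIn γ i s U :=
  fun ε hε => γ.trans (h _) (γ.trans (hF ε hε) (γ.symm (h _)))

theorem EdgesIn.insert (hj : EdgesIn δ i {j} U) (hs : EdgesIn δ i s U) :
    EdgesIn δ i (insert j s) U := by
  rintro ε ⟨k, rfl | hk, hε⟩
  · exact hj ε ⟨k, rfl, hε⟩
  · exact hs ε ⟨k, hk, hε⟩

theorem IsMalcevModulo.exists_edgesIn (hp : IsMalcevModulo p θ δ) (hδγ : δ ≤ γ)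
    (hα : ∀ i, α i ≤ θ) (hs : s.Finite) (hi : i ∉ s) (hF : IsCube α F) (hedge : EdgesIn γ i s F) :
    ∃ U, IsCube α U ∧ (∀ ε, γ.r (U ε) (F ε)) ∧ EdgesIn δ i s U := by
  refine hs.induction_on_subset (motive := fun t _ => ∃ U, IsCube α U ∧
    (∀ ε, γ.r (U ε) (F ε)) ∧ EdgesIn δ i t U) s ⟨F, hF, fun _ => γ.refl _, nofun⟩ ?_
  rintro j t hj - - ⟨U, hU, hUF, ht⟩
  have hij : i ≠ j := fun hij => hi (hij ▸ hj)
  have hclose := (hp.mono hδγ).rel_collapse hα hU (hedge.congr hUF) hj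
  exact ⟨collapse p i j U, hU.collapse hp.isPolynomial, fun ε => γ.trans (hclose ε) (hUF ε),
    (hp.edgesIn_collapse_singleton hα hU hij).insert (ht.collapse hp.isPolynomial hij)⟩

variable [Finite ι]

theorem IsMalcevModulo.cubeCentralizes_of_le (hp : IsMalcevModulo p θ δ) (hα : ∀ i, α i ≤ θ)
    (hδγ : δ ≤ γ) (hδ : CubeCentralizes α i δ) : CubeCentralizes α i γ := by
  intro F hF hedge
  obtain ⟨U, hU, hUF, hUedge⟩ :=
    hp.exists_edgesIn hδγ hα (Set.toFinite {i}ᶜ) (by simp) hF hedge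
  exact γ.trans (γ.symm (hUF _)) (γ.trans (hδγ _ _ (hδ U hU hUedge)) (hUF _))

end Malcev

section CubePair

variable {A : Algebra σ} {p : A.carrier → A.carrier → A.carrier → A.carrier} {θ δ : Con A}
  {ι : Type*} {α : ι → Con A} {x y z : A.carrier}

/-- `y` is the top corner of an `α`-cube all of whose other corners are `x`, modulo `δ`. -/
def CubePair (α : ι → Con A) (δ : Con A) (x y : A.carrier) : Prop :=
  ∃ U, IsCube α U ∧ (∀ ε ≠ ⊤, δ.r (U ε) x) ∧ δ.r (U ⊤) y

namespace CubePair

theorem refl (x : A.carrier) : CubePair α δ x x :=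
  ⟨_, .const x, fun _ _ => δ.refl x, δ.refl x⟩

theorem rel [Nonempty ι] (hα : ∀ i, α i ≤ θ) (hδ : δ ≤ θ) : CubePair α δ x y → θ.r x y :=
  fun ⟨_, hU, hx, hy⟩ => θ.trans (θ.symm (hδ _ _ (hx ⊥ bot_ne_top)))
    (θ.trans (hU.rel fun i _ => hα i) (hδ _ _ hy))

theorem compat (o : σ.ops) {x y : Fin (σ.arity o) → A.carrier}
    (h : ∀ j, CubePair α δ (x j) (y j)) : CubePair α δ (A.interp o x) (A.interp o y) := by
  choose U hU hx hy using h
  exact ⟨_, .app o U hU, fun ε hε => δ.compat o _ _ fun j => hx j ε hε, δ.compat o _ _ hy⟩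

variable [Nonempty ι]

theorem symm (hp : IsMalcevModulo p θ δ) (hα : ∀ i, α i ≤ θ) (hδ : δ ≤ θ)
    (h : CubePair α δ x y) : CubePair α δ y x := by
  have hxy := h.rel hα hδ
  obtain ⟨U, hU, hx, hy⟩ := h
  have hcongr {u v : A.carrier} (huv : δ.r u v) : δ.r (p x u y) (p x v y) :=
    hp.isPolynomial.rel δ (δ.refl x) huv (δ.refl y)
  exact ⟨_, .ternary hp.isPolynomial (.const x) hU (.const y),
    fun ε hε => δ.trans (hcongr (hx ε hε)) (hp.right (θ.symm hxy)),
    δ.trans (hcongr hy) (hp.left hxy)⟩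

theorem trans (hp : IsMalcevModulo p θ δ) (hα : ∀ i, α i ≤ θ) (hδ : δ ≤ θ)
    (h : CubePair α δ x y) (h' : CubePair α δ y z) : CubePair α δ x z := by
  have hxy := h.rel hα hδ
  have hyz := h'.rel hα hδ
  obtain ⟨U, hU, hUx, hUy⟩ := h
  obtain ⟨W, hW, hWy, hWz⟩ := h'
  have hcongr {u u' w w' : A.carrier} (hu : δ.r u u') (hw : δ.r w w') :
      δ.r (p u y w) (p u' y w') := hp.isPolynomial.rel δ hu (δ.refl y) hw
  exact ⟨_, .ternary hp.isPolynomial hU (.const y) hW,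
    fun ε hε => δ.trans (hcongr (hUx ε hε) (hWy ε hε)) (hp.left hxy),
    δ.trans (hcongr hUy hWz) (hp.right (θ.symm hyz))⟩

end CubePair

variable [Nonempty ι]

/-- The pairs of `CubePair α δ` form a congruence as soon as there is a polynomial which is
Mal'cev modulo `δ` on a congruence above `δ` and all `α i`. -/
def cubePairCon (hp : IsMalcevModulo p θ δ) (hα : ∀ i, α i ≤ θ) (hδ : δ ≤ θ) : Con A where
  r := CubePair α δ
  refl := .refl
  symm := .symm hp hα hδ
  trans := .trans hp hα hδ
  compat o _ _ := .compat o

theorem le_cubePairCon (hp : IsMalcevModulo p θ δ) (hα : ∀ i, α i ≤ θ) (hδ : δ ≤ θ) :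
    δ ≤ cubePairCon hp hα hδ :=
  fun x _ hxy => ⟨_, .const x, fun _ _ => δ.refl x, hxy⟩

theorem cubeCentralizes_cubePairCon [Finite ι] [DecidableEq ι] (hp : IsMalcevModulo p θ δ)
    (hα : ∀ i, α i ≤ θ) (hδ : δ ≤ θ) (i : ι) :
    CubeCentralizes α i (cubePairCon hp hα hδ) := by
  intro F hF hedge
  set γ := cubePairCon hp hα hδ
  obtain ⟨U, hU, hUF, hUedge⟩ :=
    hp.exists_edgesIn (le_cubePairCon hp hα hδ) hα (Set.toFinite {i}ᶜ) (by simp) hF hedge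
  set x := U (Function.update ⊤ i false)
  have hcongr {u v : A.carrier} (huv : δ.r u v) : δ.r (p u v x) (p v v x) :=
    hp.isPolynomial.rel δ huv (δ.refl v) (δ.refl x)
  have hpair : γ.r x (U ⊤) := by
    have hθ (ε ε' : ι → Bool) : θ.r (U ε) (U ε') := hU.rel fun i _ => hα i
    refine ⟨_, .ternary hp.isPolynomial hU (hU.update i false) (.const x), fun ε hε => ?_,
      hp.left (hθ _ _)⟩
    exact δ.trans (hcongr (hUedge.rel_update_false_of_ne_top hε)) (hp.right (hθ _ _))
  exact γ.trans (γ.symm (hUF _)) (γ.trans hpair (hUF _))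

theorem IsMalcevModulo.cubePair_of_rel_commList {n : ℕ} {θs : Fin (n + 1) → Con A}
    (hp : IsMalcevModulo p θ δ) (hθs : ∀ i, θs i ≤ θ) (hδ : δ ≤ θ) (h : (commList θs).r x y) :
    CubePair θs δ x y :=
  commList_le (cubeCentralizes_cubePairCon hp hθs hδ _) x y h

end CubePair

section Fiber

variable {A : Algebra σ} {δ : Con A} {ι κ : Type*} {α : κ → Con A} {β : ι → Con A} {f : κ → ι}

theorem CubePair.of_subsingleton [Subsingleton κ] {x y : A.carrier} (h : ∀ k, (α k).r x y) :
    CubePair α δ x y := by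
  cases isEmpty_or_nonempty κ with
  | inl _ => exact ⟨_, .const y, fun ε hε => (hε (Subsingleton.elim ε ⊤)).elim, δ.refl y⟩
  | inr hκ =>
    obtain ⟨k⟩ := hκ
    refine ⟨_, .edge k x y (h k), fun ε hε => ?_, δ.refl y⟩
    obtain ⟨j, hj⟩ := exists_eq_false_iff.2 hε
    rw [Subsingleton.elim k j, hj]
    exact δ.refl x

theorem CubePair.reindex {x y : A.carrier} (h : CubePair α δ x y) (hf : f.Surjective)
    (hαβ : ∀ k, α k ≤ β (f k)) : CubePair β δ x y := by
  obtain ⟨U, hU, hx, hy⟩ := h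
  refine ⟨_, hU.reindex f hαβ, fun ε hε => hx _ fun htop => hε ?_, hy⟩
  exact hf.injective_comp_right (a₁ := ε) (a₂ := ⊤) htop

open Classical in
/-- Each coordinate `i` of the corner `fiberAnd f ε` is the conjunction of the coordinates of `ε`
over the fibre of `f` at `i`. -/
noncomputable def fiberAnd (f : κ → ι) (ε : κ → Bool) (i : ι) : Bool :=
  decide (∀ k, f k = i → ε k = true)

theorem fiberAnd_eq_false_iff {ε : κ → Bool} {i : ι} :
    fiberAnd f ε i = false ↔ ∃ k, f k = i ∧ ε k = false := by
  simp [fiberAnd]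

theorem fiberAnd_top : fiberAnd f ⊤ = ⊤ := by
  simp [fiberAnd, funext_iff]

theorem IsCube.exists_rel_fiberAnd
    (hβ : ∀ i x y, (β i).r x y → CubePair (fun k : {k // f k = i} => α k) δ x y)
    {F : (ι → Bool) → A.carrier} (hF : IsCube β F) :
    ∃ G, IsCube α G ∧ ∀ ε, δ.r (G ε) (F (fiberAnd f ε)) := by
  induction hF with
  | const a => exact ⟨_, .const a, fun _ => δ.refl a⟩
  | edge i x y hxy =>
    obtain ⟨U, hU, hx, hy⟩ := hβ i x y hxy
    refine ⟨_, hU.reindex Subtype.val fun _ => le_rfl, fun ε => ?_⟩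
    have hval : fiberAnd f ε i = true ↔ (fun k : {k // f k = i} => ε k) = ⊤ := by
      simp [fiberAnd, funext_iff]
    by_cases htop : (fun k : {k // f k = i} => ε k) = ⊤
    · simpa only [htop, hval.2 htop, if_true] using hy
    · simpa only [Bool.eq_false_of_not_eq_true (mt hval.1 htop), Bool.false_eq_true, if_false]
        using hx _ htop
  | app o H _ ih =>
    choose G hG hδ using ih
    exact ⟨_, .app o G hG, fun ε => δ.compat o _ _ fun j => hδ j ε⟩

variable [DecidableEq ι] [DecidableEq κ]

theorem fiberAnd_update (ε : κ → Bool) (k : κ) (c : Bool) :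
    fiberAnd f (Function.update ε k c) =
      Function.update (fiberAnd f ε) (f k) (fiberAnd f (Function.update ε k c) (f k)) := by
  refine (Function.update_eq_iff.2 ⟨rfl, fun i hi => ?_⟩).symm
  have hne (j : κ) (hj : f j = i) : j ≠ k := fun hjk => hi (by rw [← hj, hjk])
  have hiff : (∀ j, f j = i → ε j = true) ↔ ∀ j, f j = i → Function.update ε k c j = true :=
    forall₂_congr fun j hj => by rw [Function.update_of_ne (hne j hj)]
  exact decide_eq_decide.2 hiff

theorem fiberAnd_update_false (ε : κ → Bool) (k : κ) :
    fiberAnd f (Function.update ε k false) = Function.update (fiberAnd f ε) (f k) false := by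
  rw [fiberAnd_update, fiberAnd_eq_false_iff.2 ⟨k, rfl, Function.update_self _ _ _⟩]

theorem CubeCentralizes.of_fiber
    (hβ : ∀ i x y, (β i).r x y → CubePair (fun k : {k // f k = i} => α k) δ x y) {k : κ}
    (h : CubeCentralizes α k δ) : CubeCentralizes β (f k) δ := by
  intro F hF hedge
  obtain ⟨G, hG, hGF⟩ := hF.exists_rel_fiberAnd hβ
  have hGedge : EdgesIn δ k {k}ᶜ G := by
    rintro ε ⟨j, hj, hε⟩
    refine δ.trans (hGF _) (δ.trans ?_ (δ.symm (hGF _)))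
    rw [fiberAnd_update_false, fiberAnd_update ε k true]
    cases htrue : fiberAnd f (Function.update ε k true) (f k)
    · exact δ.refl _
    · refine hedge _ ⟨f j, fun hjk => ?_, fiberAnd_eq_false_iff.2 ⟨j, rfl, hε⟩⟩
      have hfalse := fiberAnd_eq_false_iff.2 ⟨j, hjk, (Function.update_of_ne hj true ε).trans hε⟩
      exact Bool.noConfusion (htrue.symm.trans hfalse)
  have hbot := hGF (Function.update ⊤ k false)
  have htop := hGF ⊤
  rw [fiberAnd_update_false, fiberAnd_top] at hbot
  rw [fiberAnd_top] at htop
  exact δ.trans (δ.symm hbot) (δ.trans (h G hG hGedge) htop)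

end Fiber

section NestedCommutator

variable {A : Algebra σ}

theorem commList_const_succ_le (θ : Con A) (n : ℕ) :
    commList (fun _ : Fin (n + 2) => θ) ≤ commList fun _ : Fin (n + 1) => θ := by
  refine commList_le ?_
  rw [← Fin.succ_last]
  refine (cubeCentralizes_commList _).of_fiber (f := Fin.succ) fun i x y hxy => ?_
  have : Subsingleton {k : Fin (n + 1) // k.succ = i} :=
    ⟨fun k l => Subtype.ext (Fin.succ_injective _ (k.2.trans l.2.symm))⟩
  exact .of_subsingleton fun _ => hxy

/-- The map of index sets which sends the last `r + 1` of `(m + 1) + (r + 1)` indices to one. -/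
def mergeTail (m r : ℕ) : Fin ((m + 1) + (r + 1)) → Fin (m + 2) :=
  Fin.addCases Fin.castSucc fun _ => Fin.last (m + 1)

theorem natAdd_ne_castAdd {m r : ℕ} (i : Fin m) (j : Fin r) : Fin.natAdd m j ≠ Fin.castAdd r i :=
  Fin.ne_of_val_ne (by simp only [Fin.val_natAdd, Fin.val_castAdd]; omega)

theorem mergeTail_eq_last_iff {m r : ℕ} {k : Fin ((m + 1) + (r + 1))} :
    mergeTail m r k = Fin.last (m + 1) ↔ ∃ j, Fin.natAdd (m + 1) j = k := by
  refine Fin.addCases (fun i => ?_) (fun i => ?_) k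
  · simp [mergeTail, Fin.castSucc_ne_last, natAdd_ne_castAdd]
  · simp [mergeTail]

theorem mergeTail_eq_castSucc_iff {m r : ℕ} {k : Fin ((m + 1) + (r + 1))} {j : Fin (m + 1)} :
    mergeTail m r k = j.castSucc ↔ k = Fin.castAdd (r + 1) j := by
  refine Fin.addCases (fun i => ?_) (fun i => ?_) k
  · simp [mergeTail]
  · simp [mergeTail, (Fin.castSucc_ne_last j).symm, natAdd_ne_castAdd]

theorem IsMalcevModulo.commList_snoc_commList_le {m r : ℕ}
    {p : A.carrier → A.carrier → A.carrier → A.carrier} {θ : Con A}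
    {θs : Fin ((m + 1) + (r + 1)) → Con A} (hp : IsMalcevModulo p θ (commList θs))
    (hθs : ∀ i, θs i ≤ θ) :
    commList (Fin.snoc (fun j => θs (Fin.castAdd (r + 1) j))
      (commList fun j : Fin (r + 1) => θs (Fin.natAdd (m + 1) j))) ≤ commList θs := by
  refine commList_le ?_
  rw [← mergeTail_eq_last_iff.2 ⟨Fin.last r, rfl⟩]
  refine (cubeCentralizes_commList θs).of_fiber fun i x y hxy => ?_
  cases i using Fin.lastCases with
  | last =>
    rw [Fin.snoc_last] at hxy
    refine (hp.cubePair_of_rel_commList (fun j => hθs _)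
      ((commList_le_last θs).trans (hθs _)) hxy).reindex
      (f := fun j => ⟨Fin.natAdd (m + 1) j, mergeTail_eq_last_iff.2 ⟨j, rfl⟩⟩) ?_ fun _ => le_rfl
    rintro ⟨k, hk⟩
    obtain ⟨j, rfl⟩ := mergeTail_eq_last_iff.1 hk
    exact ⟨j, rfl⟩
  | cast j =>
    rw [Fin.snoc_castSucc] at hxy
    have hfiber (k : {k // mergeTail m r k = j.castSucc}) : k.1 = Fin.castAdd (r + 1) j :=
      mergeTail_eq_castSucc_iff.1 k.2
    have : Subsingleton {k // mergeTail m r k = j.castSucc} :=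
      ⟨fun k l => Subtype.ext ((hfiber k).trans (hfiber l).symm)⟩
    exact .of_subsingleton fun k => (hfiber k).symm ▸ hxy

end NestedCommutator

section Iteration

variable {A : Algebra σ} {θ φ : Con A}

theorem nfold_mono {c d : Con A} (h : c ≤ d) (n : ℕ) : nfold c n ≤ nfold d n :=
  commList_mono fun _ => h

theorem nfold_le (θ : Con A) (n : ℕ) : nfold θ n ≤ θ :=
  commList_le_last fun _ : Fin (n - 1 + 1) => θ

theorem nfold_antitone (θ : Con A) : Antitone (nfold θ) :=
  antitone_nat_of_succ_le fun n => by
    cases n with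
    | zero => exact le_rfl
    | succ n => exact commList_const_succ_le θ n

/-- First `p x (p x y y) (p x y z)` doubles the precision of the identity `p a b b = a`, then the
mirror image of this construction does the same for the identity `p b b a = a`. -/
theorem IsMalcevModulo.exists_double {D : Con A → Con A} (hD : D ≤ id)
    {p : A.carrier → A.carrier → A.carrier → A.carrier}
    (hp : ∀ θ, IsMalcevModulo p θ (D θ)) : ∃ q, ∀ θ, IsMalcevModulo q θ (D (D θ)) := by
  have hpoly := (hp Con.bot).isPolynomial
  let r x y z := p x (p x y y) (p x y z)
  have hr : IsTernaryPolynomial A r :=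
    hpoly.comp (.proj 0) (hpoly.comp (.proj 0) (.proj 1) (.proj 1)) hpoly
  have hr_left {θ : Con A} {a b : A.carrier} (hab : θ.r a b) : (D (D θ)).r (r a b b) a :=
    (hp (D θ)).left ((D θ).symm ((hp θ).left hab))
  have hr_right {θ : Con A} {a b : A.carrier} (hab : θ.r a b) : (D θ).r (r b b a) a := by
    have hpb : p b b b = b := hD Con.bot _ _ ((hp Con.bot).left rfl)
    have hpa := (hp θ).right hab
    simp only [r, hpb]
    exact (D θ).trans ((hp θ).right (θ.trans (hD θ _ _ hpa) hab)) hpa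
  refine ⟨fun x y z => r (r x y z) (r y y z) z, fun θ => ⟨?_, fun {a b} hab => ?_, fun hab => ?_⟩⟩
  · exact hr.comp hr (hr.comp (.proj 1) (.proj 1) (.proj 2)) (.proj 2)
  · have hrb : r b b b = b := hD Con.bot _ _ (hr_right rfl)
    have hra := hr_left hab
    simp only [hrb]
    exact (D (D θ)).trans (hr_left (θ.trans (hD θ _ _ (hD (D θ) _ _ hra)) hab)) hra
  · exact hr_right ((D θ).symm (hr_right hab))

theorem IsMalcevModulo.exists_iterate {D : Con A → Con A} (hD : D ≤ id)
    {p : A.carrier → A.carrier → A.carrier → A.carrier}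
    (hp : ∀ θ, IsMalcevModulo p θ (D θ)) (k : ℕ) :
    ∃ q, ∀ θ, IsMalcevModulo q θ (D^[2 ^ k] θ) := by
  induction k with
  | zero => exact ⟨p, hp⟩
  | succ k ih =>
    obtain ⟨q, hq⟩ := ih
    simpa only [pow_succ, Nat.mul_two, Function.iterate_add_apply] using
      exists_double (Function.iterate_le_id_of_le_id hD _) hq

theorem Xi.le (h : Xi θ φ) : φ ≤ θ := by
  induction h with
  | base => exact le_rfl
  | comm γ _ ih => exact (commList_le_last γ).trans (ih _)

theorem Xi.commList {n : ℕ} {θs : Fin (n + 1) → Con A} (h : ∀ i, Xi θ (θs i)) :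
    Xi θ (commList θs) := by
  cases n with
  | zero => exact h 0
  | succ n => exact .comm θs h

theorem iterate_nfold_antitone (θ : Con A) (n : ℕ) :
    Antitone fun k => (nfold · n)^[k] θ :=
  fun _ _ hkl => Function.antitone_iterate_of_le_id (fun c => nfold_le c n) hkl θ

theorem Xi.exists_iterate_le (h : Xi θ φ) :
    ∃ n₀ k₀, ∀ n ≥ n₀, ∀ k ≥ k₀, (nfold · n)^[k] θ ≤ φ := by
  induction h with
  | base => exact ⟨0, 0, fun n _ k _ => iterate_nfold_antitone θ n (Nat.zero_le k)⟩
  | @comm m γ _ ih =>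
    choose n₀ k₀ hγ using ih
    refine ⟨max (m + 2) (Finset.univ.sup n₀), Finset.univ.sup k₀ + 1, fun n hn k hk => ?_⟩
    obtain ⟨hmn, hn₀⟩ := max_le_iff.1 hn
    calc
      (nfold · n)^[k] θ ≤ (nfold · n)^[Finset.univ.sup k₀ + 1] θ :=
        iterate_nfold_antitone θ n hk
      _ = nfold ((nfold · n)^[Finset.univ.sup k₀] θ) n := Function.iterate_succ_apply' _ _ _
      _ ≤ nfold ((nfold · n)^[Finset.univ.sup k₀] θ) (m + 2) := nfold_antitone _ hmn
      _ ≤ UA.commList γ := commList_mono fun i =>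
        hγ i n ((Finset.le_sup (Finset.mem_univ i)).trans hn₀) _ (Finset.le_sup (Finset.mem_univ i))

end Iteration

section Homomorphism

variable {A B : Algebra σ} {h : A.carrier → B.carrier}

/-- The preimage of a congruence under a homomorphism. -/
def Con.comap (hh : IsHom A B h) (c : Con B) : Con A where
  r x y := c.r (h x) (h y)
  refl _ := c.refl _
  symm := c.symm
  trans := c.trans
  compat o x y hxy := by
    rw [hh, hh]
    exact c.compat o _ _ hxy

theorem Con.comap_bot_of_injective (hh : IsHom A B h) (hinj : h.Injective) :
    Con.bot.comap hh = Con.bot :=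
  Con.ext fun _ _ => hinj.eq_iff

section Cube

variable {ι : Type*} {α : ι → Con A} {β : ι → Con B}

theorem IsCube.map (hh : IsHom A B h) (hαβ : ∀ i, α i ≤ (β i).comap hh)
    {F : (ι → Bool) → A.carrier} (hF : IsCube α F) : IsCube β fun ε => h (F ε) := by
  induction hF with
  | const a => exact .const (h a)
  | edge i x y hxy => simpa only [apply_ite h] using .edge i _ _ (hαβ i x y hxy)
  | app o G _ ih =>
    simp only [hh o]
    exact .app o _ ih

theorem IsCube.exists_lift (hh : IsHom A B h) (hs : h.Surjective)
    (hαβ : ∀ i, (β i).comap hh ≤ α i) {F : (ι → Bool) → B.carrier} (hF : IsCube β F) :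
    ∃ G, IsCube α G ∧ F = fun ε => h (G ε) := by
  induction hF with
  | const b =>
    obtain ⟨a, rfl⟩ := hs b
    exact ⟨_, .const a, rfl⟩
  | edge i x y hxy =>
    obtain ⟨x, rfl⟩ := hs x
    obtain ⟨y, rfl⟩ := hs y
    exact ⟨_, .edge i x y (hαβ i x y hxy), by simp only [apply_ite h]⟩
  | app o H _ ih =>
    choose G hG hHG using ih
    exact ⟨_, .app o G hG, by simp only [hh o, hHG]⟩

variable [DecidableEq ι] {i : ι} {γ : Con B}

theorem CubeCentralizes.comap (hh : IsHom A B h) (hαβ : ∀ i, α i ≤ (β i).comap hh)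
    (hβ : CubeCentralizes β i γ) : CubeCentralizes α i (γ.comap hh) :=
  fun _ hF hedge => hβ _ (hF.map hh hαβ) hedge

theorem CubeCentralizes.of_comap (hh : IsHom A B h) (hs : h.Surjective)
    (hαβ : ∀ i, (β i).comap hh ≤ α i) (hα : CubeCentralizes α i (γ.comap hh)) :
    CubeCentralizes β i γ := by
  intro F hF hedge
  obtain ⟨G, hG, rfl⟩ := hF.exists_lift hh hs hαβ
  exact hα G hG hedge

end Cube

theorem commList_le_comap (hh : IsHom A B h) {n : ℕ} {θs : Fin (n + 1) → Con A}
    {φs : Fin (n + 1) → Con B} (hθφ : ∀ i, θs i ≤ (φs i).comap hh) :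
    commList θs ≤ (commList φs).comap hh :=
  commList_le ((cubeCentralizes_commList φs).comap hh hθφ)

theorem isHom_mk (η : Con A) : IsHom A (quotAlg A η) (Quotient.mk η.toSetoid) :=
  fun o _ => Quotient.sound (η.compat o _ _ fun _ => η.symm (Quotient.mk_out (s := η.toSetoid) _))

theorem le_comap_mk (η : Con A) (c : Con (quotAlg A η)) : η ≤ c.comap (isHom_mk η) := by
  intro x y hxy
  have hmk : Quotient.mk η.toSetoid x = Quotient.mk η.toSetoid y := Quotient.sound hxy
  change c.r (Quotient.mk _ x) (Quotient.mk _ y)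
  exact hmk ▸ c.refl _

theorem Con.quot_le_iff {c η : Con A} {h : η ≤ c} {d : Con (quotAlg A η)} :
    c.quot η h ≤ d ↔ c ≤ d.comap (isHom_mk η) :=
  ⟨fun hle x y => hle (Quotient.mk _ x) (Quotient.mk _ y),
    fun hle x y => Quotient.inductionOn₂ x y hle⟩

theorem isHom_proj {I : Type} (As : I → Algebra σ) (i : I) :
    IsHom (prodAlg As) (As i) fun x => x i := fun _ _ => rfl

theorem IsHom.eval (hh : IsHom A B h) {X : Type} (t : Term σ X) (v : X → A.carrier) :
    h (t.eval A v) = t.eval B (h ∘ v) := by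
  induction t with
  | var x => rfl
  | app o s ih => exact (hh o _).trans (congrArg (B.interp o) (funext ih))

variable {V : Algebra σ → Prop}

theorem IsVariety.of_surjective (hV : IsVariety V) (hA : V A) (hh : IsHom A B h)
    (hs : h.Surjective) : V B := by
  obtain ⟨E, hE⟩ := hV
  refine (hE B).2 fun e he v => ?_
  obtain ⟨w, rfl⟩ := hs.comp_left v
  rw [← hh.eval, ← hh.eval, (hE A).1 hA e he]

theorem IsVariety.of_injective (hV : IsVariety V) (hB : V B) (hh : IsHom A B h)
    (hinj : h.Injective) : V A := by
  obtain ⟨E, hE⟩ := hV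
  refine (hE A).2 fun e he v => hinj ?_
  rw [hh.eval, hh.eval, (hE B).1 hB e he]

theorem IsVariety.prod (hV : IsVariety V) {I : Type} {As : I → Algebra σ}
    (hAs : ∀ i, V (As i)) : V (prodAlg As) := by
  obtain ⟨E, hE⟩ := hV
  refine (hE _).2 fun e he v => funext fun i => ?_
  calc
    e.1.eval (prodAlg As) v i = e.1.eval (As i) fun n => v n i := (isHom_proj As i).eval e.1 v
    _ = e.2.eval (As i) fun n => v n i := (hE _).1 (hAs i) e he _
    _ = e.2.eval (prodAlg As) v i := ((isHom_proj As i).eval e.2 v).symm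

end Homomorphism

section WeakDifferenceTerm

variable {A B : Algebra σ} {θ φ : Con A}

/-- The algebra `A` has a weak `m`-difference term for every `m ≥ 2`. -/
def HasWeakDifferenceTerms (A : Algebra σ) : Prop :=
  ∀ m, 2 ≤ m → ∃ c : Term σ (Fin 3), IsWeakNDiffTerm (· = A) m c

namespace HasWeakDifferenceTerms

theorem of_surjective (hA : HasWeakDifferenceTerms A) {h : A.carrier → B.carrier}
    (hh : IsHom A B h) (hs : h.Surjective) : HasWeakDifferenceTerms B := by
  intro m hm
  obtain ⟨c, hc⟩ := hA m hm
  refine ⟨c, ?_⟩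
  rintro _ rfl a b
  obtain ⟨a, rfl⟩ := hs a
  obtain ⟨b, rfl⟩ := hs b
  have hpair : conPair A a b ≤ (conPair _ (h a) (h b)).comap hh :=
    conPair_le fun _ hp => hp _ rfl
  have hle : nfold (conPair A a b) m ≤ (nfold (conPair _ (h a) (h b)) m).comap hh :=
    commList_le_comap hh fun _ => hpair
  have heval (x y z : A.carrier) : h (c.eval A ![x, y, z]) = c.eval _ ![h x, h y, h z] := 
    (hh.eval c _).trans (congrArg (c.eval _) (funext fun i => by fin_cases i <;> rfl))
  simp only [← heval]
  exact (hc A rfl a b).imp (hle _ _) (hle _ _)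

theorem exists_isMalcevModulo_nfold (hA : HasWeakDifferenceTerms A) {m : ℕ} (hm : 2 ≤ m) :
    ∃ p, ∀ θ : Con A, IsMalcevModulo p θ (nfold θ m) := by
  obtain ⟨c, hc⟩ := hA m hm
  refine ⟨fun x y z => c.eval A ![x, y, z], fun θ => ⟨?_, fun hab => ?_, fun hab => ?_⟩⟩
  · exact c.isPolynomial (q := fun i v => ![v 0, v 1, v 2] i) fun i => by
      fin_cases i <;> exact .proj _
  · exact nfold_mono (conPair_le hab) m _ _ (hc A rfl _ _).1
  · exact (nfold θ m).symm (nfold_mono (conPair_le hab) m _ _ (hc A rfl _ _).2)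

theorem exists_isMalcevModulo (hA : HasWeakDifferenceTerms A) (h : Xi θ φ) :
    ∃ p, IsMalcevModulo p θ φ := by
  obtain ⟨n, k, hnk⟩ := h.exists_iterate_le
  obtain ⟨p, hp⟩ := hA.exists_isMalcevModulo_nfold (Nat.le_add_left 2 n)
  obtain ⟨q, hq⟩ := IsMalcevModulo.exists_iterate (fun c => nfold_le c (n + 2)) hp k
  exact ⟨q, (hq θ).mono (hnk _ (Nat.le_add_right n 2) _ Nat.lt_two_pow_self.le)⟩

end HasWeakDifferenceTerms

end WeakDifferenceTerm

section HigherCommutator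

variable {A : Algebra σ} {p : A.carrier → A.carrier → A.carrier → A.carrier} {θ : Con A} {n : ℕ}
  {θs : Fin (n + 1) → Con A}

theorem IsMalcevModulo.cubeCentralizes_iff_commList_le (hp : IsMalcevModulo p θ (commList θs))
    (hθs : ∀ i, θs i ≤ θ) {γ : Con A} :
    CubeCentralizes θs (Fin.last n) γ ↔ commList θs ≤ γ :=
  ⟨commList_le, fun h => hp.cubeCentralizes_of_le hθs h (cubeCentralizes_commList θs)⟩

theorem IsMalcevModulo.commList_quot (hp : IsMalcevModulo p θ (commList θs))
    (hθs : ∀ i, θs i ≤ θ) {η : Con A} (hη : ∀ i, η ≤ θs i) :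
    commList (fun i => (θs i).quot η (hη i)) =
      (Con.sup (commList θs) η).quot η Con.le_sup_right := by
  refine le_antisymm ?_ (Con.quot_le_iff.2 (Con.sup_le ?_ (le_comap_mk η _)))
  · exact commList_le (.of_comap (isHom_mk η) Quotient.mk_surjective (fun _ => le_rfl)
      ((hp.cubeCentralizes_iff_commList_le hθs).2 Con.le_sup_left))
  · exact commList_le_comap (isHom_mk η) fun _ => le_rfl

theorem binComm_eq_commList (c d : Con A) :
    binComm c d = commList (Fin.snoc (fun _ : Fin 1 => c) d) := by
  simp only [binComm, commList, Fin.snoc_castSucc, Fin.snoc_last]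

namespace HasWeakDifferenceTerms

theorem commList_snoc_commList_le (hA : HasWeakDifferenceTerms A) {m r : ℕ}
    {θs : Fin ((m + 1) + (r + 1)) → Con A} (hθs : ∀ i, Xi θ (θs i)) :
    commList (Fin.snoc (fun j => θs (Fin.castAdd (r + 1) j))
      (commList fun j : Fin (r + 1) => θs (Fin.natAdd (m + 1) j))) ≤ commList θs :=
  have ⟨_, hp⟩ := hA.exists_isMalcevModulo (.commList hθs)
  hp.commList_snoc_commList_le fun i => (hθs i).le

theorem lcs_le_nfold (hA : HasWeakDifferenceTerms A) (θ : Con A) (k : ℕ) :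
    lcs θ k ≤ nfold θ (k + 1) := by
  induction k with
  | zero => exact le_rfl
  | succ k ih =>
    calc
      lcs θ (k + 1) = commList (Fin.snoc (fun _ : Fin 1 => θ) (lcs θ k)) :=
        binComm_eq_commList _ _
      _ ≤ commList (Fin.snoc (fun _ : Fin 1 => θ) (nfold θ (k + 1))) := commList_mono fun i => by
        cases i using Fin.lastCases with
        | last => simpa only [Fin.snoc_last] using ih
        | cast i => simp only [Fin.snoc_castSucc, le_refl]
      _ ≤ nfold θ (0 + 1 + k + 1) :=
        hA.commList_snoc_commList_le (m := 0) (θs := fun _ => θ) fun _ => .base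
      _ = nfold θ (k + 1 + 1) := by rw [Nat.zero_add, Nat.add_comm 1 k]

theorem centralizes_cover (hA : HasWeakDifferenceTerms A) {β γ s : Con A} {k : ℕ}
    (hk : nfold β k ≤ γ) (hcov : γ.Covers s) (hs : s ≤ β) :
    Centralizes (fun _ : Fin 1 => s) s γ := by
  have hγs : γ ≤ s := hcov.1.1
  have ⟨p, hp⟩ := hA.exists_isMalcevModulo (.commList (θs := fun _ : Fin 2 => s) fun _ => .base)
  have ⟨q, hq⟩ := hA.exists_isMalcevModulo
    (.commList (θs := fun _ : Fin (k - 1 + 1) => s) fun _ => .base)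
  refine centralizes_iff.2 ((hp.cubeCentralizes_iff_commList_le fun _ => le_rfl).2 ?_)
  by_contra hnot
  let t := s.quot γ hγs
  have htt : binComm t t = t := by
    have hsup := hcov.sup_eq (commList_le_last fun _ : Fin 2 => s) hnot
    refine (hp.commList_quot (fun _ => le_rfl) fun _ => hγs).trans ?_
    simp only [hsup, t]
  have hlcs (j : ℕ) : lcs t j = t := by
    induction j with
    | zero => rfl
    | succ j ih => rw [lcs, ih, htt]
  have hquot : HasWeakDifferenceTerms (quotAlg A γ) :=
    hA.of_surjective (isHom_mk γ) Quotient.mk_surjective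
  have hle := hquot.lcs_le_nfold t (k - 1)
  have hsγ : s ≤ Con.sup (nfold s k) γ := by
    rw [hlcs] at hle
    exact Con.quot_le_iff.1 (hle.trans (hq.commList_quot (fun _ => le_rfl) fun _ => hγs).le)
  exact hcov.1.2 (hsγ.trans (Con.sup_le ((nfold_mono hs k).trans hk) le_rfl))

end HasWeakDifferenceTerms

end HigherCommutator

section Supernilpotent

variable {A B : Algebra σ} {h : A.carrier → B.carrier} {n : ℕ}

theorem supernilpotent_iff_cubeCentralizes :
    Supernilpotent A n ↔
      CubeCentralizes (fun _ : Fin (n - 1 + 1) => (Con.top : Con A)) (Fin.last _) Con.bot := by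
  refine ⟨fun hA => ?_, fun hA => le_antisymm (commList_le hA) (Con.bot_le _)⟩
  have hbot : commList (fun _ : Fin (n - 1 + 1) => (Con.top : Con A)) = Con.bot := hA
  exact hbot ▸ cubeCentralizes_commList fun _ : Fin (n - 1 + 1) => (Con.top : Con A)

theorem Supernilpotent.of_injective (hB : Supernilpotent B n) (hh : IsHom A B h)
    (hinj : h.Injective) : Supernilpotent A n := by
  rw [supernilpotent_iff_cubeCentralizes] at hB ⊢
  rw [← Con.comap_bot_of_injective hh hinj]
  exact hB.comap hh fun _ => Con.le_top _

theorem Supernilpotent.prod {I : Type} {As : I → Algebra σ}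
    (hAs : ∀ i, Supernilpotent (As i) n) : Supernilpotent (prodAlg As) n := by
  refine supernilpotent_iff_cubeCentralizes.2 fun F hF hedge => funext fun i => ?_
  exact supernilpotent_iff_cubeCentralizes.1 (hAs i) _
    (hF.map (isHom_proj As i) fun _ => Con.le_top _) fun ε hε => congrFun (hedge ε hε) i

namespace HasWeakDifferenceTerms

theorem supernilpotent_of_surjective (hA : HasWeakDifferenceTerms A) (hn : Supernilpotent A n)
    (hh : IsHom A B h) (hs : h.Surjective) : Supernilpotent B n := by
  have ⟨p, hp⟩ := hA.exists_isMalcevModulo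
    (.commList (θs := fun _ : Fin (n - 1 + 1) => Con.top) fun _ => .base)
  refine supernilpotent_iff_cubeCentralizes.2 (.of_comap (α := fun _ => Con.top) hh hs
    (fun _ => Con.le_top _) ((hp.cubeCentralizes_iff_commList_le fun _ => le_rfl).2 ?_))
  exact le_of_eq_of_le hn (Con.bot_le _)

theorem nilpotentOfClass (hA : HasWeakDifferenceTerms A) (hn : Supernilpotent A (n + 1)) :
    NilpotentOfClass A n :=
  le_antisymm ((hA.lcs_le_nfold _ n).trans_eq hn) (Con.bot_le _)

end HasWeakDifferenceTerms

end Supernilpotent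

theorem weak_difference_terms_higher_commutator_general {A : Algebra σ}
    (hA : HasWeakDifferenceTerms A) :
    (∀ (θ : Con A) (m : ℕ) (θs : Fin (m + 1) → Con A), (∀ i, Xi θ (θs i)) →
      ((∀ γ : Con A,
          Centralizes (fun j : Fin m => θs j.castSucc) (θs (Fin.last m)) γ ↔
            commList θs ≤ γ) ∧
        (∀ (η : Con A) (hη : ∀ i, η ≤ θs i),
          commList (fun i => (θs i).quot η (hη i)) =
            (Con.sup (commList θs) η).quot η Con.le_sup_right))) ∧
    (∀ (θ : Con A) (m r : ℕ) (θs : Fin ((m + 1) + (r + 1)) → Con A), (∀ i, Xi θ (θs i)) →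
      commList (Fin.snoc (fun j : Fin (m + 1) => θs (Fin.castAdd (r + 1) j))
          (commList fun j : Fin (r + 1) => θs (Fin.natAdd (m + 1) j))) ≤ commList θs) ∧
    (∀ (n : ℕ) (B : Algebra σ), Supernilpotent A n →
      ∀ h : A.carrier → B.carrier, IsHom A B h → Function.Surjective h → Supernilpotent B n) ∧
    (∀ n : ℕ, Supernilpotent A (n + 1) → NilpotentOfClass A n) ∧
    (∀ (β γ s : Con A) (k : ℕ), nfold β k ≤ γ → Con.Covers γ s → s ≤ β →
      Centralizes (fun _ : Fin 1 => s) s γ) := by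
  refine ⟨fun θ m θs hθs => ?_, fun θ m r θs => hA.commList_snoc_commList_le,
    fun n B hn h => hA.supernilpotent_of_surjective hn, fun n => hA.nilpotentOfClass,
    fun β γ s k => hA.centralizes_cover⟩
  obtain ⟨p, hp⟩ := hA.exists_isMalcevModulo (.commList hθs)
  have hle (i : Fin (m + 1)) : θs i ≤ θ := (hθs i).le
  exact ⟨fun γ => centralizes_iff.trans (hp.cubeCentralizes_iff_commList_le hle),
    fun η hη => hp.commList_quot hle hη⟩

/-- Theorem 5.9 of "On Supernilpotent Algebras": properties of the higher
commutator in varieties with weak `m`-difference terms for all `m ≥ 2`. -/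
theorem weak_difference_terms_higher_commutator {σ : Signature} (V : Algebra σ → Prop)
    (hV : IsVariety V)
    (hdiff : ∀ m : ℕ, 2 ≤ m → ∃ c : Term σ (Fin 3), IsWeakNDiffTerm V m c)
    (A : Algebra σ) (hA : V A) :
    -- (1a), (1b)
    (∀ (θ : Con A) (m : ℕ) (θs : Fin (m + 1) → Con A), (∀ i, Xi θ (θs i)) →
      ((∀ γ : Con A,
          Centralizes (fun j : Fin m => θs j.castSucc) (θs (Fin.last m)) γ ↔
            commList θs ≤ γ) ∧
        (∀ (η : Con A) (hη : ∀ i, η ≤ θs i),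
          commList (fun i => (θs i).quot η (hη i)) =
            (Con.sup (commList θs) η).quot η Con.le_sup_right))) ∧
    -- (1c) nested commutators
    (∀ (θ : Con A) (m₀ r₀ : ℕ) (θs : Fin ((m₀ + 1) + (r₀ + 1)) → Con A),
      (∀ i, Xi θ (θs i)) →
      commList (Fin.snoc (fun j : Fin (m₀ + 1) => θs (Fin.castAdd (r₀ + 1) j))
          (commList (fun j : Fin (r₀ + 1) => θs (Fin.natAdd (m₀ + 1) j)))) ≤
        commList θs) ∧
    -- (2) the n-supernilpotent members of V form a subvariety
    (∀ n : ℕ, 2 ≤ n →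
      (∀ (A₁ B : Algebra σ), V A₁ → Supernilpotent A₁ n →
        ∀ h : A₁.carrier → B.carrier, IsHom A₁ B h → Function.Surjective h →
          V B ∧ Supernilpotent B n) ∧
      (∀ (A₁ B : Algebra σ), V A₁ → Supernilpotent A₁ n →
        ∀ h : B.carrier → A₁.carrier, IsHom B A₁ h → Function.Injective h →
          V B ∧ Supernilpotent B n) ∧
      (∀ (I : Type) (As : I → Algebra σ),
        (∀ i, V (As i) ∧ Supernilpotent (As i) n) →
          V (prodAlg As) ∧ Supernilpotent (prodAlg As) n)) ∧
    -- (3) supernilpotent implies nilpotent of class n-1, and covers in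
    -- supernilpotent intervals are abelian
    (∀ n : ℕ, 2 ≤ n → Supernilpotent A n →
      (NilpotentOfClass A (n - 1) ∧
        ∀ α β : Con A, α ≤ β → (∃ k, 2 ≤ k ∧ nfold β k ≤ α) →
          ∀ γc s : Con A, α ≤ γc → Con.Covers γc s → s ≤ β →
            Centralizes (fun _ : Fin 1 => s) s γc)) := by
  have hweak {B : Algebra σ} (hB : V B) : HasWeakDifferenceTerms B := fun m hm =>
    (hdiff m hm).imp fun _ hc C hC => hc C (hC ▸ hB)
  have hgeneral {B : Algebra σ} (hB : V B) :=
    weak_difference_terms_higher_commutator_general (hweak hB)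
  obtain ⟨hcomm, hnested, -, hnil, hcover⟩ := hgeneral hA
  refine ⟨hcomm, hnested, fun n _ => ⟨?_, ?_, ?_⟩, ?_⟩
  · intro A₁ B hA₁ hn h hh hs
    obtain ⟨-, -, hsurj, -⟩ := hgeneral hA₁
    exact ⟨hV.of_surjective hA₁ hh hs, hsurj n B hn h hh hs⟩
  · exact fun A₁ B hA₁ hn h hh hinj => ⟨hV.of_injective hA₁ hh hinj, hn.of_injective hh hinj⟩
  · exact fun I As hAs => ⟨hV.prod fun i => (hAs i).1, .prod fun i => (hAs i).2⟩
  · rintro (_ | n) hn hA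
    · omega
    · exact ⟨hnil n hA, fun α β _ ⟨k, _, hk⟩ γ s hαγ hcov hs =>
        hcover β γ s k (hk.trans hαγ) hcov hs⟩

end UA
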